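/- Let T_a be the random trigonometric polynomial of degree n with a ~ N(0, I_N), N = 2n+1. Then for all 1 ≤ p, q < ∞ there exist constants c, C > 0 (independent of n but possibly depending on p, q) such that c ≤ E[‖T_a‖_q / ‖T_a‖_p] ≤ C. In particular the average Nikolskii factor is bounded, in contrast to the worst-case factor which grows like n^{(1/p - 1/q)_+}. -/

import Mathlib

open MeasureTheory ProbabilityTheory Real

/-- The random trigonometric polynomial
`T_a(x) = a₁ + ∑_{k=1}^n (a_{2k} √2 cos kx + a_{2k+1} √2 sin kx)`. -/
noncomputable def trigPoly (n : ℕ) (a : Fin (2 * n + 1) → ℝ) (x : ℝ) : ℝ :=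
  a ⟨0, by omega⟩ + ∑ k : Fin n,
    (a ⟨2 * k.1 + 1, by have := k.2; omega⟩ * Real.sqrt 2 * Real.cos ((k.1 + 1 : ℝ) * x)
      + a ⟨2 * k.1 + 2, by have := k.2; omega⟩ * Real.sqrt 2 * Real.sin ((k.1 + 1 : ℝ) * x))

/-- The normalized `L^p` norm on the torus `[0, 2π]`, for `1 ≤ p < ∞`. -/
noncomputable def torusLpNorm (p : ℝ) (f : ℝ → ℝ) : ℝ :=
  ((2 * π)⁻¹ * ∫ x in (0 : ℝ)..(2 * π), |f x| ^ p) ^ (1 / p)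

open scoped NNReal ENNReal

/-!
On a probability space, Cauchy–Schwarz and the monotonicity of `‖·‖_r` in `r` give
`‖f‖_q / ‖f‖_p ≤ (‖f‖_r / ‖f‖_2)^r` as soon as `r ≥ max {4, p, 4/p, q}`. Take `r = 2j` even and
write `T_a(x) = φ(x) ⬝ a` with `φ` the trigonometric system, so that `‖T_a‖_2² = a ⬝ a` by
orthonormality and the right-hand side becomes the average over `x` of
`((φ(x) ⬝ a)² / (a ⬝ a))^j`. For fixed `x` its Gaussian expectation is bounded independently of the
dimension `N`: the numerator is the `2j`-th moment of a normal variable of variance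
`φ(x) ⬝ φ(x) = N`, while by a Chernoff bound `a ⬝ a > N / 2` except with probability
`e^{-N/12}`, where the ratio is still at most `N^j`. This is the upper bound. The lower bound
follows from the upper bound with `p` and `q` exchanged, since `1 ≤ E[R] E[1/R]` for `R > 0`.
-/

section LpNorm

variable {X E : Type*} [MeasurableSpace X] {ν : Measure X} [NormedAddCommGroup E] {f : X → E}

lemma lpNorm_le_lpNorm_of_exponent_le [IsProbabilityMeasure ν] {p q : ℝ≥0∞} (hpq : p ≤ q)
    (hf : MemLp f q ν) : lpNorm f p ν ≤ lpNorm f q ν := by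
  simp only [← toReal_eLpNorm hf.aestronglyMeasurable]
  exact ENNReal.toReal_mono hf.eLpNorm_ne_top
    (eLpNorm_le_eLpNorm_of_exponent_le hpq hf.aestronglyMeasurable)

lemma lpNorm_rpow_eq_integral_norm_rpow {p : ℝ≥0} (hp : p ≠ 0) (hf : AEStronglyMeasurable f ν) :
    lpNorm f p ν ^ (p : ℝ) = ∫ x, ‖f x‖ ^ (p : ℝ) ∂ν := by
  rw [lpNorm_nnreal_eq_integral_norm_rpow hp hf,
    rpow_inv_rpow (integral_nonneg fun _ => by positivity) (by exact_mod_cast hp)]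

lemma lpNorm_two_pow_four_le {p q : ℝ≥0} (hpq : p + q = 4) (hp : p ≠ 0) (hq : q ≠ 0)
    (hfp : MemLp f p ν) (hfq : MemLp f q ν) :
    lpNorm f 2 ν ^ 4 ≤ lpNorm f p ν ^ (p : ℝ) * lpNorm f q ν ^ (q : ℝ) := by
  have memLp_two {s : ℝ≥0} (hs : s ≠ 0) (hf : MemLp f s ν) :
      MemLp (fun x => ‖f x‖ ^ ((s : ℝ) / 2)) (ENNReal.ofReal 2) ν := by
    have hs' : (s : ℝ≥0∞) ≠ 0 := by simpa
    simpa [ENNReal.div_eq_inv_mul, ENNReal.mul_inv, ENNReal.inv_mul_cancel_right, hs', mul_assoc,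
      ENNReal.inv_mul_cancel, div_eq_inv_mul] using hf.norm_rpow_div (s / 2)
  have hpq' : (p : ℝ) / 2 + q / 2 = (2 : ℝ≥0) := by
    have : (p : ℝ) + q = 4 := by exact_mod_cast hpq
    norm_num; linarith
  have half_mul_two (s : ℝ≥0) (x : X) : (‖f x‖ ^ ((s : ℝ) / 2)) ^ (2 : ℝ) = ‖f x‖ ^ (s : ℝ) := by
    rw [← rpow_mul (norm_nonneg _), div_mul_cancel₀ _ two_ne_zero]
  have cauchy_schwarz := integral_mul_norm_le_Lp_mul_Lq HolderConjugate.two_two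
    (memLp_two hp hfp) (memLp_two hq hfq)
  simp only [norm_of_nonneg (rpow_nonneg (norm_nonneg _) _), half_mul_two,
    ← rpow_add_of_nonneg (norm_nonneg _) (half_pos (NNReal.coe_pos.2 hp.bot_lt)).le
      (half_pos (NNReal.coe_pos.2 hq.bot_lt)).le, hpq', ← sqrt_eq_rpow,
    ← lpNorm_rpow_eq_integral_norm_rpow two_ne_zero hfp.aestronglyMeasurable,
    ← lpNorm_rpow_eq_integral_norm_rpow hp hfp.aestronglyMeasurable,
    ← lpNorm_rpow_eq_integral_norm_rpow hq hfp.aestronglyMeasurable] at cauchy_schwarz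
  rw [← sqrt_mul (rpow_nonneg lpNorm_nonneg _)] at cauchy_schwarz
  simpa [← pow_mul] using
    (Real.le_sqrt (rpow_nonneg lpNorm_nonneg _)
      (mul_nonneg (rpow_nonneg lpNorm_nonneg _) (rpow_nonneg lpNorm_nonneg _))).1 cauchy_schwarz

lemma lpNorm_two_rpow_le [IsProbabilityMeasure ν] {p r : ℝ≥0} (hp : p ≠ 0) (hp4 : p < 4)
    (hr : 4 ≤ r) (hf : MemLp f r ν) (hf₀ : 0 < lpNorm f 2 ν) :
    lpNorm f 2 ν ^ (p : ℝ) ≤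
      lpNorm f p ν ^ (p : ℝ) * (lpNorm f r ν / lpNorm f 2 ν) ^ (4 - p : ℝ) := by
  have memLp {s : ℝ≥0} (hs : s ≤ 4) : MemLp f s ν :=
    hf.mono_exponent (by exact_mod_cast hs.trans hr)
  have coe_sub : ((4 - p : ℝ≥0) : ℝ) = 4 - p := NNReal.coe_sub hp4.le
  have split : lpNorm f 2 ν ^ (p : ℝ) * lpNorm f 2 ν ^ (4 - p : ℝ) = lpNorm f 2 ν ^ 4 := by
    rw [← rpow_add hf₀, add_sub_cancel, ← rpow_natCast, Nat.cast_ofNat]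
  rw [div_rpow lpNorm_nonneg hf₀.le, ← mul_div_assoc, le_div_iff₀ (rpow_pos_of_pos hf₀ _), split]
  calc lpNorm f 2 ν ^ 4
      ≤ lpNorm f p ν ^ (p : ℝ) * lpNorm f (4 - p : ℝ≥0) ν ^ ((4 - p : ℝ≥0) : ℝ) :=
        lpNorm_two_pow_four_le (add_tsub_cancel_of_le hp4.le) hp (tsub_pos_of_lt hp4).ne'
          (memLp hp4.le) (memLp tsub_le_self)
    _ ≤ lpNorm f p ν ^ (p : ℝ) * lpNorm f r ν ^ ((4 - p : ℝ≥0) : ℝ) := by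
        gcongr
        · exact rpow_nonneg lpNorm_nonneg _
        · exact lpNorm_nonneg
        · exact lpNorm_le_lpNorm_of_exponent_le (ENNReal.coe_le_coe.2 (tsub_le_self.trans hr)) hf
    _ = lpNorm f p ν ^ (p : ℝ) * lpNorm f r ν ^ (4 - p : ℝ) := by rw [coe_sub]

lemma lpNorm_two_le_lpNorm_mul_rpow [IsProbabilityMeasure ν] {p r : ℝ≥0} (hp : p ≠ 0)
    (hr : 4 ≤ r) (hpr : p ≤ r) (hpr' : 4 / p ≤ r) (hf : MemLp f r ν) (hf₀ : 0 < lpNorm f 2 ν) :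
    lpNorm f 2 ν ≤ lpNorm f p ν * (lpNorm f r ν / lpNorm f 2 ν) ^ ((r : ℝ) - 1) := by
  have sub_one_nonneg : 0 ≤ (r : ℝ) - 1 := by
    have : (4 : ℝ) ≤ r := by exact_mod_cast hr
    linarith
  have one_le_ratio : 1 ≤ lpNorm f r ν / lpNorm f 2 ν :=
    (one_le_div hf₀).2 (lpNorm_le_lpNorm_of_exponent_le
      (by exact_mod_cast (by norm_num : (2 : ℝ≥0) ≤ 4).trans hr) hf)
  rcases le_total 2 p with h2p | hp2
  · calc lpNorm f 2 ν ≤ lpNorm f p ν :=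
          lpNorm_le_lpNorm_of_exponent_le (by exact_mod_cast h2p)
            (hf.mono_exponent (by exact_mod_cast hpr))
      _ ≤ lpNorm f p ν * (lpNorm f r ν / lpNorm f 2 ν) ^ ((r : ℝ) - 1) :=
          le_mul_of_one_le_right lpNorm_nonneg (one_le_rpow one_le_ratio sub_one_nonneg)
  · have hp_pos : (0 : ℝ) < p := by exact_mod_cast hp.bot_lt
    have interpolation := lpNorm_two_rpow_le hp (hp2.trans_lt (by norm_num)) hr hf hf₀
    set R := lpNorm f r ν / lpNorm f 2 ν
    have exponent_le : 4 - (p : ℝ) ≤ (r - 1) * p := by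
      have : 4 / (p : ℝ) ≤ r := by exact_mod_cast hpr'
      linarith [(div_le_iff₀ hp_pos).1 this]
    refine (rpow_le_rpow_iff hf₀.le (mul_nonneg lpNorm_nonneg (by positivity)) hp_pos).1 ?_
    calc lpNorm f 2 ν ^ (p : ℝ)
        ≤ lpNorm f p ν ^ (p : ℝ) * R ^ (4 - p : ℝ) := interpolation
      _ ≤ lpNorm f p ν ^ (p : ℝ) * R ^ ((r - 1) * p : ℝ) := by
          gcongr
          exact rpow_nonneg lpNorm_nonneg _
      _ = (lpNorm f p ν * R ^ ((r : ℝ) - 1)) ^ (p : ℝ) := by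
          rw [mul_rpow lpNorm_nonneg (by positivity), rpow_mul (by positivity)]

lemma lpNorm_div_lpNorm_le [IsProbabilityMeasure ν] {p q r : ℝ≥0} (hp : p ≠ 0)
    (hr : 4 ≤ r) (hpr : p ≤ r) (hpr' : 4 / p ≤ r) (hqr : q ≤ r) (hf : MemLp f r ν)
    (hf₀ : 0 < lpNorm f 2 ν) :
    lpNorm f q ν / lpNorm f p ν ≤ (lpNorm f r ν / lpNorm f 2 ν) ^ (r : ℝ) := by
  have hr_pos : (0 : ℝ) < r := by exact_mod_cast (by norm_num : (0 : ℝ≥0) < 4).trans_le hr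
  refine div_le_of_le_mul₀ lpNorm_nonneg
    (rpow_nonneg (div_nonneg lpNorm_nonneg lpNorm_nonneg) _) ?_
  calc lpNorm f q ν ≤ lpNorm f r ν :=
        lpNorm_le_lpNorm_of_exponent_le (by exact_mod_cast hqr) hf
    _ = lpNorm f r ν / lpNorm f 2 ν * lpNorm f 2 ν := (div_mul_cancel₀ _ hf₀.ne').symm
    _ ≤ lpNorm f r ν / lpNorm f 2 ν *
          (lpNorm f p ν * (lpNorm f r ν / lpNorm f 2 ν) ^ ((r : ℝ) - 1)) := by
        gcongr
        exacts [div_nonneg lpNorm_nonneg lpNorm_nonneg,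
          lpNorm_two_le_lpNorm_mul_rpow hp hr hpr hpr' hf hf₀]
    _ = (lpNorm f r ν / lpNorm f 2 ν) ^ (r : ℝ) * lpNorm f p ν := by
        nth_rw 1 [mul_left_comm, ← rpow_one (lpNorm f r ν / lpNorm f 2 ν)]
        rw [← rpow_add' (div_nonneg lpNorm_nonneg lpNorm_nonneg) (by simpa using hr_pos.ne'),
          add_sub_cancel, mul_comm]

end LpNorm

section DotProduct

variable {ι R : Type*} [Fintype ι]

lemma dotProduct_self_nonneg [Ring R] [LinearOrder R] [IsStrictOrderedRing R] (v : ι → R) :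
    0 ≤ v ⬝ᵥ v :=
  Fintype.sum_nonneg fun i => mul_self_nonneg (v i)

lemma dotProduct_sq_le [CommRing R] [LinearOrder R] [IsStrictOrderedRing R] (v w : ι → R) :
    (v ⬝ᵥ w) ^ 2 ≤ (v ⬝ᵥ v) * (w ⬝ᵥ w) := by
  simpa only [dotProduct, pow_two] using Finset.sum_mul_sq_le_sq_mul_sq Finset.univ v w

end DotProduct

section Gaussian

variable {ι : Type*} [Fintype ι]

/-- The law of a vector `a = (a i)` with i.i.d. standard normal coordinates. -/
noncomputable abbrev gaussianPi (ι : Type*) [Fintype ι] : Measure (ι → ℝ) :=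
  Measure.pi fun _ => gaussianReal 0 1

lemma map_dotProduct_gaussianPi (v : ι → ℝ) :
    (gaussianPi ι).map (v ⬝ᵥ ·) = gaussianReal 0 (v ⬝ᵥ v).toNNReal := by
  refine Measure.ext_of_charFun (funext fun t => ?_)
  rw [charFun_apply_real, integral_map (by fun_prop) (by fun_prop)]
  have prod_exp (a : ι → ℝ) : Complex.exp (t * (v ⬝ᵥ a : ℝ) * Complex.I) =
      ∏ i, Complex.exp ((t * v i : ℝ) * a i * Complex.I) := by
    rw [← Complex.exp_sum, dotProduct]
    push_cast
    simp only [Finset.mul_sum, Finset.sum_mul, mul_assoc]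
  simp_rw [prod_exp, integral_fintype_prod_eq_prod
    fun i (x : ℝ) => Complex.exp ((t * v i : ℝ) * x * Complex.I), ← charFun_apply_real,
    charFun_gaussianReal, ← Complex.exp_sum, coe_toNNReal _ (dotProduct_self_nonneg v)]
  congr 1
  simp [dotProduct, Finset.sum_div, Finset.mul_sum, pow_two, mul_comm, mul_left_comm]

lemma integrable_pow_gaussianReal (μ : ℝ) (w : ℝ≥0) (k : ℕ) :
    Integrable (fun x => x ^ k) (gaussianReal μ w) :=
  integrable_pow_of_mem_interior_integrableExpSet (X := id)
    (by simp [integrableExpSet_id_gaussianReal]) k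

lemma integral_pow_two_mul_gaussianReal (w : ℝ≥0) (j : ℕ) :
    ∫ x, x ^ (2 * j) ∂gaussianReal 0 w = w ^ j * ∫ x, x ^ (2 * j) ∂gaussianReal 0 1 := by
  have scaling : gaussianReal 0 w = (gaussianReal 0 1).map (√w * ·) := by
    rw [gaussianReal_map_const_mul, mul_zero, mul_one]
    congr 1
    ext
    simp
  rw [scaling, integral_map (by fun_prop) (by fun_prop)]
  simp [mul_pow, pow_mul, integral_const_mul]

lemma integrable_dotProduct_pow_gaussianPi (v : ι → ℝ) (k : ℕ) :
    Integrable (fun a => (v ⬝ᵥ a) ^ k) (gaussianPi ι) := by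
  have := integrable_pow_gaussianReal 0 (v ⬝ᵥ v).toNNReal k
  rw [← map_dotProduct_gaussianPi] at this
  exact this.comp_measurable (f := (v ⬝ᵥ ·)) (by fun_prop)

lemma integral_dotProduct_pow_two_mul_gaussianPi (v : ι → ℝ) (j : ℕ) :
    ∫ a, (v ⬝ᵥ a) ^ (2 * j) ∂gaussianPi ι =
      (v ⬝ᵥ v) ^ j * ∫ x, x ^ (2 * j) ∂gaussianReal 0 1 := by
  rw [← integral_map (f := fun y : ℝ => y ^ (2 * j))
    (by fun_prop : AEMeasurable (v ⬝ᵥ ·) (gaussianPi ι)) (by fun_prop),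
    map_dotProduct_gaussianPi, integral_pow_two_mul_gaussianReal,
    coe_toNNReal _ (dotProduct_self_nonneg v)]

lemma mgf_sq_gaussianReal (t : ℝ) :
    mgf (fun x => x ^ 2) (gaussianReal 0 1) t = (√(1 - 2 * t))⁻¹ := by
  have density (x : ℝ) : gaussianPDFReal 0 1 x • rexp (t * x ^ 2) =
      (√(2 * π))⁻¹ * rexp (-((1 - 2 * t) / 2) * x ^ 2) := by
    simp only [gaussianPDFReal, smul_eq_mul, NNReal.coe_one, mul_one, sub_zero, mul_assoc,
      ← exp_add]
    ring_nf
  rw [mgf, integral_gaussianReal_eq_integral_smul one_ne_zero]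
  simp_rw [density]
  rw [integral_const_mul, integral_gaussian, div_div_eq_mul_div, mul_comm π,
    sqrt_div (by positivity)]
  field_simp

lemma exp_mul_dotProduct_self (t : ℝ) (a : ι → ℝ) :
    rexp (t * (a ⬝ᵥ a)) = ∏ i, rexp (t * a i ^ 2) := by
  simp only [← exp_sum, dotProduct, Finset.mul_sum, pow_two]

lemma mgf_dotProduct_self_gaussianPi (t : ℝ) :
    mgf (fun a => a ⬝ᵥ a) (gaussianPi ι) t = (√(1 - 2 * t))⁻¹ ^ Fintype.card ι := by
  simp_rw [mgf, exp_mul_dotProduct_self, integral_fintype_prod_eq_pow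
    fun x : ℝ => rexp (t * x ^ 2), ← mgf_sq_gaussianReal, mgf]

lemma measureReal_dotProduct_self_le_half_card :
    (gaussianPi ι).real {a | a ⬝ᵥ a ≤ Fintype.card ι / 2} ≤ rexp (-(Fintype.card ι / 12)) := by
  have integrable : Integrable (fun a => rexp (-1 / 2 * (a ⬝ᵥ a))) (gaussianPi ι) := by
    refine .of_bound (by fun_prop) 1 (.of_forall fun a => ?_)
    rw [norm_of_nonneg (exp_nonneg _), exp_le_one_iff]
    linarith [dotProduct_self_nonneg a]
  calc (gaussianPi ι).real {a | a ⬝ᵥ a ≤ Fintype.card ι / 2}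
      ≤ rexp (-(-1 / 2) * (Fintype.card ι / 2)) * mgf (fun a => a ⬝ᵥ a) (gaussianPi ι) (-1 / 2) :=
        measure_le_le_exp_mul_mgf _ (by norm_num) integrable
    _ = rexp (Fintype.card ι * (1 / 4 - log 2 / 2)) := by
        rw [mgf_dotProduct_self_gaussianPi, ← exp_log (x := (√(1 - 2 * (-1 / 2)))⁻¹) (by norm_num),
          ← exp_nat_mul, ← exp_add, log_inv, log_sqrt (by norm_num)]
        ring_nf
    _ ≤ rexp (-(Fintype.card ι / 12)) := by
        rw [exp_le_exp]
        nlinarith [log_two_gt_d9, (Fintype.card ι).cast_nonneg (α := ℝ)]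

lemma dotProduct_sq_div_pow_le (v a : ι → ℝ) (j : ℕ) {t : ℝ} (ht : 0 < t) :
    ((v ⬝ᵥ a) ^ 2 / (a ⬝ᵥ a)) ^ j ≤ (v ⬝ᵥ a) ^ (2 * j) / t ^ j +
      {b : ι → ℝ | b ⬝ᵥ b ≤ t}.indicator (fun _ => (v ⬝ᵥ v) ^ j) a := by
  have hv := dotProduct_self_nonneg v
  have ha := dotProduct_self_nonneg a
  rw [pow_mul, ← div_pow]
  by_cases small : a ∈ {b : ι → ℝ | b ⬝ᵥ b ≤ t}
  · calc ((v ⬝ᵥ a) ^ 2 / (a ⬝ᵥ a)) ^ j ≤ (v ⬝ᵥ v) ^ j := by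
          gcongr; exact div_le_of_le_mul₀ ha hv (dotProduct_sq_le v a)
      _ ≤ _ := by
          rw [Set.indicator_of_mem small]; exact le_add_of_nonneg_left (by positivity)
  · rw [Set.indicator_of_notMem small, add_zero]
    gcongr
    exact (not_le.1 small).le

/-- An explicit constant `C_j`, independent of the dimension, in the bound
`E[((v ⬝ a)² / (a ⬝ a))^j] ≤ C_j ((v ⬝ v) / N)^j` for a standard Gaussian `a` in `ℝ^N`. -/
noncomputable def projectionMomentConst (j : ℕ) : ℝ :=
  2 ^ j * ∫ x, x ^ (2 * j) ∂gaussianReal 0 1 + 12 ^ j * j.factorial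

lemma projectionMomentConst_pos (j : ℕ) : 0 < projectionMomentConst j := by
  have : 0 ≤ ∫ x : ℝ, x ^ (2 * j) ∂gaussianReal 0 1 :=
    integral_nonneg fun x => (even_two_mul j).pow_nonneg x
  unfold projectionMomentConst
  positivity

lemma pow_mul_exp_neg_div_le (j : ℕ) {x c : ℝ} (hx : 0 ≤ x) (hc : 0 < c) :
    x ^ j * rexp (-(x / c)) ≤ c ^ j * j.factorial := by
  have := pow_div_factorial_le_exp (x / c) (by positivity) j
  rw [exp_neg, ← div_eq_mul_inv, div_le_iff₀ (exp_pos _)]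
  calc x ^ j = c ^ j * j.factorial * ((x / c) ^ j / j.factorial) := by rw [div_pow]; field_simp
    _ ≤ c ^ j * j.factorial * rexp (x / c) := by gcongr

lemma integral_dotProduct_sq_div_pow_le [Nonempty ι] (v : ι → ℝ) (j : ℕ) :
    ∫ a, ((v ⬝ᵥ a) ^ 2 / (a ⬝ᵥ a)) ^ j ∂gaussianPi ι ≤
      projectionMomentConst j * ((v ⬝ᵥ v) / Fintype.card ι) ^ j := by
  have hN : (0 : ℝ) < Fintype.card ι := by exact_mod_cast Fintype.card_pos
  have hv := dotProduct_self_nonneg v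
  set S := {a : ι → ℝ | a ⬝ᵥ a ≤ Fintype.card ι / 2}
  have measurableSet_S : MeasurableSet S := measurableSet_le (by fun_prop) (by fun_prop)
  have integrable_moment := (integrable_dotProduct_pow_gaussianPi v (2 * j)).div_const
    ((Fintype.card ι / 2 : ℝ) ^ j)
  have integrable_indicator :=
    (integrable_const (μ := gaussianPi ι) ((v ⬝ᵥ v) ^ j)).indicator measurableSet_S
  calc ∫ a, ((v ⬝ᵥ a) ^ 2 / (a ⬝ᵥ a)) ^ j ∂gaussianPi ι
      ≤ ∫ a, ((v ⬝ᵥ a) ^ (2 * j) / (Fintype.card ι / 2) ^ j +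
          S.indicator (fun _ => (v ⬝ᵥ v) ^ j) a) ∂gaussianPi ι :=
        integral_mono_of_nonneg
          (.of_forall fun a => pow_nonneg (div_nonneg (sq_nonneg _) (dotProduct_self_nonneg a)) j)
          (integrable_moment.add integrable_indicator)
          (.of_forall fun a => dotProduct_sq_div_pow_le v a j (half_pos hN))
    _ = ((v ⬝ᵥ v) / Fintype.card ι) ^ j * (2 ^ j * ∫ x, x ^ (2 * j) ∂gaussianReal 0 1 +
          Fintype.card ι ^ j * (gaussianPi ι).real S) := by
        rw [integral_add integrable_moment integrable_indicator, integral_div,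
          integral_dotProduct_pow_two_mul_gaussianPi, integral_indicator_const _ measurableSet_S,
          smul_eq_mul, div_pow, div_pow]
        field_simp
    _ ≤ ((v ⬝ᵥ v) / Fintype.card ι) ^ j * (2 ^ j * ∫ x, x ^ (2 * j) ∂gaussianReal 0 1 +
          Fintype.card ι ^ j * rexp (-(Fintype.card ι / 12))) := by
        gcongr
        exact measureReal_dotProduct_self_le_half_card
    _ ≤ ((v ⬝ᵥ v) / Fintype.card ι) ^ j * projectionMomentConst j := by
        rw [projectionMomentConst]
        gcongr _ * (_ + ?_)
        exact pow_mul_exp_neg_div_le j hN.le (by norm_num : (0 : ℝ) < 12)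
    _ = projectionMomentConst j * ((v ⬝ᵥ v) / Fintype.card ι) ^ j := mul_comm _ _

end Gaussian

section IntegralInv

lemma one_le_integral_mul_integral_inv {Ω : Type*} [MeasurableSpace Ω] {μ : Measure Ω}
    [IsProbabilityMeasure μ] {X : Ω → ℝ} (hpos : ∀ᵐ ω ∂μ, 0 < X ω) (hX : Integrable X μ)
    (hXinv : Integrable (fun ω => (X ω)⁻¹) μ) :
    1 ≤ (∫ ω, X ω ∂μ) * ∫ ω, (X ω)⁻¹ ∂μ := by
  have integral_pos : 0 < ∫ ω, X ω ∂μ := by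
    rw [integral_pos_iff_support_of_nonneg_ae (hpos.mono fun _ => le_of_lt) hX]
    have support_ae_univ : Function.support X =ᵐ[μ] Set.univ :=
      Filter.eventuallyEq_univ.2 (hpos.mono fun _ h => h.ne')
    simp [measure_congr support_ae_univ]
  set m := ∫ ω, X ω ∂μ
  have tangent : ∀ᵐ ω ∂μ, 2 - X ω / m ≤ m * (X ω)⁻¹ := by
    filter_upwards [hpos] with ω hω
    have : m * (X ω)⁻¹ - (2 - X ω / m) = (m - X ω) ^ 2 / (m * X ω) := by field_simp; ring
    linarith [show 0 ≤ (m - X ω) ^ 2 / (m * X ω) by positivity]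
  calc 1 = ∫ ω, (2 - X ω / m) ∂μ := by
        rw [integral_sub (integrable_const _) (hX.div_const m), integral_div,
          div_self integral_pos.ne']
        norm_num
    _ ≤ ∫ ω, m * (X ω)⁻¹ ∂μ :=
        integral_mono_ae ((integrable_const _).sub (hX.div_const m)) (hXinv.const_mul m) tangent
    _ = m * ∫ ω, (X ω)⁻¹ ∂μ := integral_const_mul _ _

end IntegralInv

section FlatOrthonormal

variable {X ι : Type*} [MeasurableSpace X] [Fintype ι] {ν : Measure X} {φ : X → ι → ℝ} {K : ℝ}

/-- The functions `x ↦ φ x i` form an orthonormal system in `L²(ν)` which is spread out evenly, in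
the sense that `∑ i, (φ x i)² ≤ K N` at every point `x`, where `N` is the number of functions
(the average over `x` of the left-hand side being `N`). -/
structure IsFlatOrthonormal (φ : X → ι → ℝ) (ν : Measure X) (K : ℝ) : Prop where
  measurable : Measurable φ
  integral_mul_self (i : ι) : ∫ x, φ x i * φ x i ∂ν = 1
  integral_mul_of_ne {i j : ι} (hij : i ≠ j) : ∫ x, φ x i * φ x j ∂ν = 0
  dotProduct_self_le (x : X) : φ x ⬝ᵥ φ x ≤ K * Fintype.card ι

/-- The Nikolskii factor `‖f‖_q / ‖f‖_p` of the function `f = ∑ i, a i • φ · i`; as `0 / 0 = 0`, it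
vanishes when `f = 0`. -/
noncomputable def nikolskiiFactor (φ : X → ι → ℝ) (ν : Measure X) (p q : ℝ≥0) (a : ι → ℝ) : ℝ :=
  lpNorm (fun x => φ x ⬝ᵥ a) q ν / lpNorm (fun x => φ x ⬝ᵥ a) p ν

lemma nikolskiiFactor_nonneg (p q : ℝ≥0) (a : ι → ℝ) : 0 ≤ nikolskiiFactor φ ν p q a :=
  div_nonneg lpNorm_nonneg lpNorm_nonneg

namespace IsFlatOrthonormal

variable (h : IsFlatOrthonormal φ ν K)
include h

lemma measurable_dotProduct (a : ι → ℝ) : Measurable fun x => φ x ⬝ᵥ a := by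
  have := h.measurable
  fun_prop

lemma dotProduct_sq_le (a : ι → ℝ) (x : X) :
    (φ x ⬝ᵥ a) ^ 2 ≤ K * Fintype.card ι * (a ⬝ᵥ a) :=
  (_root_.dotProduct_sq_le (φ x) a).trans
    (mul_le_mul_of_nonneg_right (h.dotProduct_self_le x) (dotProduct_self_nonneg a))

lemma memLp_dotProduct [IsFiniteMeasure ν] (p : ℝ≥0∞) (a : ι → ℝ) :
    MemLp (fun x => φ x ⬝ᵥ a) p ν :=
  .of_bound (h.measurable_dotProduct a).aestronglyMeasurable _
    (.of_forall fun x => abs_le_sqrt (h.dotProduct_sq_le a x))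

lemma integrable_mul [IsFiniteMeasure ν] (i j : ι) : Integrable (fun x => φ x i * φ x j) ν := by
  classical
  have memLp (k : ι) : MemLp (fun x => φ x k) 2 ν := by
    simpa using h.memLp_dotProduct 2 (Pi.single k 1)
  exact (memLp i).integrable_mul (memLp j)

lemma integral_dotProduct_sq [IsFiniteMeasure ν] (a : ι → ℝ) :
    ∫ x, (φ x ⬝ᵥ a) ^ 2 ∂ν = a ⬝ᵥ a := by
  have expand (x : X) :
      (φ x ⬝ᵥ a) ^ 2 = ∑ i, ∑ j, a i * a j * (φ x i * φ x j) := by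
    rw [pow_two, dotProduct, Finset.sum_mul_sum]
    exact Finset.sum_congr rfl fun i _ => Finset.sum_congr rfl fun j _ => by ring
  have integrable (i j : ι) : Integrable (fun x => a i * a j * (φ x i * φ x j)) ν :=
    (h.integrable_mul i j).const_mul _
  simp_rw [expand]
  rw [integral_finsetSum _ fun i _ => integrable_finsetSum _ fun j _ => integrable i j]
  refine Finset.sum_congr rfl fun i _ => ?_
  rw [integral_finsetSum _ fun j _ => integrable i j, Finset.sum_eq_single i]
  · rw [integral_const_mul, h.integral_mul_self, mul_one]
  · intro j _ hji
    rw [integral_const_mul, h.integral_mul_of_ne hji.symm, mul_zero]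
  · exact fun hi => absurd (Finset.mem_univ i) hi

lemma lpNorm_two_mul_pow [IsFiniteMeasure ν] (a : ι → ℝ) (j : ℕ) :
    lpNorm (fun x => φ x ⬝ᵥ a) 2 ν ^ (2 * j) = (a ⬝ᵥ a) ^ j := by
  have := lpNorm_rpow_eq_integral_norm_rpow (p := 2) two_ne_zero
    (h.measurable_dotProduct a).aestronglyMeasurable (ν := ν)
  simp only [NNReal.coe_ofNat, rpow_ofNat, norm_eq_abs, sq_abs, h.integral_dotProduct_sq,
    ENNReal.coe_ofNat] at this
  rw [pow_mul, this]

lemma lpNorm_two_pos [IsFiniteMeasure ν] {a : ι → ℝ} (ha : a ≠ 0) :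
    0 < lpNorm (fun x => φ x ⬝ᵥ a) 2 ν := by
  have := h.lpNorm_two_mul_pow a 1
  refine lpNorm_nonneg.lt_of_ne' fun h₀ => ha ?_
  simpa [h₀, eq_comm] using this

lemma nikolskiiFactor_le_integral [IsProbabilityMeasure ν] {p q : ℝ≥0} {j : ℕ} (hp : p ≠ 0)
    (hj : 2 ≤ j) (hpj : p ≤ 2 * j) (hpj' : 4 / p ≤ 2 * j) (hqj : q ≤ 2 * j) (a : ι → ℝ) :
    nikolskiiFactor φ ν p q a ≤ ∫ x, ((φ x ⬝ᵥ a) ^ 2 / (a ⬝ᵥ a)) ^ j ∂ν := by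
  rcases eq_or_ne a 0 with rfl | ha
  · have : j ≠ 0 := by omega
    simp [nikolskiiFactor, this]
  have four_le : (4 : ℝ≥0) ≤ 2 * j := by exact_mod_cast (by omega : 4 ≤ 2 * j)
  set r : ℝ≥0 := 2 * j
  have rpow_r (x : ℝ) : x ^ (r : ℝ) = x ^ (2 * j) := by simp [r, ← rpow_natCast]
  have lpNorm_pow : lpNorm (fun x => φ x ⬝ᵥ a) r ν ^ (2 * j) = ∫ x, ((φ x ⬝ᵥ a) ^ 2) ^ j ∂ν := by
    rw [← rpow_r, lpNorm_rpow_eq_integral_norm_rpow (by positivity)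
      (h.measurable_dotProduct a).aestronglyMeasurable]
    simp_rw [rpow_r, pow_mul, norm_eq_abs, sq_abs]
  calc nikolskiiFactor φ ν p q a
      ≤ (lpNorm (fun x => φ x ⬝ᵥ a) r ν / lpNorm (fun x => φ x ⬝ᵥ a) 2 ν) ^ (r : ℝ) :=
        lpNorm_div_lpNorm_le hp four_le hpj hpj' hqj (h.memLp_dotProduct _ a) (h.lpNorm_two_pos ha)
    _ = ∫ x, ((φ x ⬝ᵥ a) ^ 2 / (a ⬝ᵥ a)) ^ j ∂ν := by
        rw [rpow_r, div_pow, h.lpNorm_two_mul_pow, lpNorm_pow]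
        simp_rw [div_pow, integral_div]

lemma nikolskiiFactor_pos [IsFiniteMeasure ν] {p q : ℝ≥0} (hp : p ≠ 0) (hq : q ≠ 0) {a : ι → ℝ}
    (ha : a ≠ 0) : 0 < nikolskiiFactor φ ν p q a := by
  have lpNorm_pos {s : ℝ≥0} (hs : s ≠ 0) : 0 < lpNorm (fun x => φ x ⬝ᵥ a) s ν := by
    refine lpNorm_nonneg.lt_of_ne' fun h₀ => (h.lpNorm_two_pos ha).ne' ?_
    rw [lpNorm_eq_zero (h.memLp_dotProduct _ a) (by simpa)] at h₀
    rwa [lpNorm_eq_zero (h.memLp_dotProduct _ a) two_ne_zero]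
  exact div_pos (lpNorm_pos hq) (lpNorm_pos hp)

lemma measurable_nikolskiiFactor [SFinite ν] {p q : ℝ≥0} (hp : p ≠ 0) (hq : q ≠ 0) :
    Measurable (nikolskiiFactor φ ν p q) := by
  have hφ := h.measurable
  have measurable_lpNorm {s : ℝ≥0} (hs : s ≠ 0) :
      Measurable fun a : ι → ℝ => lpNorm (fun x => φ x ⬝ᵥ a) s ν := by
    simp_rw [lpNorm_nnreal_eq_integral_norm_rpow hs
      (h.measurable_dotProduct _).aestronglyMeasurable]
    have : Measurable fun z : (ι → ℝ) × X => ‖φ z.2 ⬝ᵥ z.1‖ ^ (s : ℝ) := by fun_prop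
    exact this.stronglyMeasurable.integral_prod_right'.measurable.pow_const _
  exact (measurable_lpNorm hq).div (measurable_lpNorm hp)

lemma integrable_prod_dotProduct_sq_div_pow [IsFiniteMeasure ν] (j : ℕ) :
    Integrable (fun z : (ι → ℝ) × X => ((φ z.2 ⬝ᵥ z.1) ^ 2 / (z.1 ⬝ᵥ z.1)) ^ j)
      ((gaussianPi ι).prod ν) := by
  have hφ := h.measurable
  have measurable : Measurable
      fun z : (ι → ℝ) × X => ((φ z.2 ⬝ᵥ z.1) ^ 2 / (z.1 ⬝ᵥ z.1)) ^ j := by fun_prop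
  refine .of_bound measurable.aestronglyMeasurable ((K * Fintype.card ι) ^ j)
    (.of_forall fun z => ?_)
  have hz := dotProduct_self_nonneg z.1
  rw [norm_of_nonneg (by positivity)]
  gcongr
  exact div_le_of_le_mul₀ hz ((dotProduct_self_nonneg _).trans (h.dotProduct_self_le z.2))
    (h.dotProduct_sq_le z.1 z.2)

variable [IsProbabilityMeasure ν] {p q : ℝ≥0} {j : ℕ}

lemma integrable_nikolskiiFactor (hp : p ≠ 0) (hq : q ≠ 0) (hj : 2 ≤ j) (hpj : p ≤ 2 * j)
    (hpj' : 4 / p ≤ 2 * j) (hqj : q ≤ 2 * j) :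
    Integrable (nikolskiiFactor φ ν p q) (gaussianPi ι) := by
  refine (h.integrable_prod_dotProduct_sq_div_pow j).integral_prod_left.mono'
    (h.measurable_nikolskiiFactor hp hq).aestronglyMeasurable (.of_forall fun a => ?_)
  rw [norm_of_nonneg (nikolskiiFactor_nonneg p q a)]
  exact h.nikolskiiFactor_le_integral hp hj hpj hpj' hqj a

lemma integral_nikolskiiFactor_le [Nonempty ι] (hp : p ≠ 0) (hq : q ≠ 0) (hj : 2 ≤ j)
    (hpj : p ≤ 2 * j) (hpj' : 4 / p ≤ 2 * j) (hqj : q ≤ 2 * j) :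
    ∫ a, nikolskiiFactor φ ν p q a ∂gaussianPi ι ≤ projectionMomentConst j * K ^ j := by
  have integrable := h.integrable_prod_dotProduct_sq_div_pow j
  have hN : (0 : ℝ) < Fintype.card ι := by exact_mod_cast Fintype.card_pos
  calc ∫ a, nikolskiiFactor φ ν p q a ∂gaussianPi ι
      ≤ ∫ a, ∫ x, ((φ x ⬝ᵥ a) ^ 2 / (a ⬝ᵥ a)) ^ j ∂ν ∂gaussianPi ι :=
        integral_mono (h.integrable_nikolskiiFactor hp hq hj hpj hpj' hqj)
          integrable.integral_prod_left (h.nikolskiiFactor_le_integral hp hj hpj hpj' hqj)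
    _ = ∫ x, ∫ a, ((φ x ⬝ᵥ a) ^ 2 / (a ⬝ᵥ a)) ^ j ∂gaussianPi ι ∂ν :=
        integral_integral_swap integrable
    _ ≤ ∫ _, projectionMomentConst j * K ^ j ∂ν := by
        refine integral_mono integrable.integral_prod_right (integrable_const _) fun x =>
          (integral_dotProduct_sq_div_pow_le (φ x) j).trans ?_
        have hx := dotProduct_self_nonneg (φ x)
        gcongr
        · exact (projectionMomentConst_pos j).le
        · exact (div_le_iff₀ hN).2 (h.dotProduct_self_le x)
    _ = projectionMomentConst j * K ^ j := by simp

lemma inv_le_integral_nikolskiiFactor [Nonempty ι] (hp : p ≠ 0) (hq : q ≠ 0) (hj : 2 ≤ j)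
    (hpj : p ≤ 2 * j) (hpj' : 4 / p ≤ 2 * j) (hqj : q ≤ 2 * j) (hqj' : 4 / q ≤ 2 * j) :
    (projectionMomentConst j * K ^ j)⁻¹ ≤ ∫ a, nikolskiiFactor φ ν p q a ∂gaussianPi ι := by
  have : NullSingletonClass (gaussianReal 0 1) := nullSingletonClass_gaussianReal one_ne_zero
  have factor_pos : ∀ᵐ a ∂gaussianPi ι, 0 < nikolskiiFactor φ ν p q a :=
    (Measure.ae_ne _ 0).mono fun _ => h.nikolskiiFactor_pos hp hq
  have inv_factor : (fun a => (nikolskiiFactor φ ν p q a)⁻¹) = nikolskiiFactor φ ν q p :=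
    funext fun _ => inv_div _ _
  have one_le := one_le_integral_mul_integral_inv factor_pos
    (h.integrable_nikolskiiFactor hp hq hj hpj hpj' hqj)
    (inv_factor ▸ h.integrable_nikolskiiFactor hq hp hj hqj hqj' hpj)
  rw [inv_factor] at one_le
  have integral_nonneg : 0 ≤ ∫ a, nikolskiiFactor φ ν p q a ∂gaussianPi ι :=
    integral_nonneg (nikolskiiFactor_nonneg p q)
  have integral_swap_pos : 0 < ∫ a, nikolskiiFactor φ ν q p a ∂gaussianPi ι :=
    pos_of_mul_pos_right (one_pos.trans_le one_le) integral_nonneg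
  calc (projectionMomentConst j * K ^ j)⁻¹
      ≤ (∫ a, nikolskiiFactor φ ν q p a ∂gaussianPi ι)⁻¹ :=
        inv_anti₀ integral_swap_pos (h.integral_nikolskiiFactor_le hq hp hj hqj hqj' hpj)
    _ ≤ ∫ a, nikolskiiFactor φ ν p q a ∂gaussianPi ι :=
        (inv_le_iff_one_le_mul₀ integral_swap_pos).2 one_le

end IsFlatOrthonormal
end FlatOrthonormal

section Torus

/-- The normalized Lebesgue measure on a period `(0, 2π]` of the torus. -/
noncomputable def torusMeasure : Measure ℝ :=
  volume[|Set.Ioc 0 (2 * π)]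

instance : IsProbabilityMeasure torusMeasure :=
  cond_isProbabilityMeasure_of_finite (by simp [pi_pos]) measure_Ioc_lt_top.ne

lemma integral_torusMeasure (f : ℝ → ℝ) :
    ∫ x, f x ∂torusMeasure = (2 * π)⁻¹ * ∫ x in (0 : ℝ)..(2 * π), f x := by
  rw [intervalIntegral.integral_of_le two_pi_pos.le, torusMeasure,
    ProbabilityTheory.cond, integral_smul_measure]
  simp [pi_pos.le, ENNReal.toReal_ofReal]

lemma torusLpNorm_eq_lpNorm {p : ℝ≥0} (hp : p ≠ 0) {f : ℝ → ℝ} (hf : Measurable f) :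
    torusLpNorm p f = lpNorm f p torusMeasure := by
  rw [lpNorm_nnreal_eq_integral_norm_rpow hp hf.aestronglyMeasurable, integral_torusMeasure,
    torusLpNorm, one_div]
  rfl

lemma integral_cos_torusMeasure (m : ℤ) (θ : ℝ) :
    ∫ x, cos (m * x - θ) ∂torusMeasure = if m = 0 then cos θ else 0 := by
  rcases eq_or_ne m 0 with rfl | hm
  · simp
  have endpoint : (m : ℝ) * (2 * π) - θ = -θ + m * (2 * π) := by ring
  rw [if_neg hm, integral_torusMeasure,
    intervalIntegral.integral_comp_mul_sub (f := cos) (Int.cast_ne_zero.2 hm), integral_cos,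
    endpoint, sin_add_int_mul_two_pi]
  simp

lemma integral_cos_mul_cos_torusMeasure (k l : ℤ) (s t : ℝ) :
    ∫ x, cos (k * x - s) * cos (l * x - t) ∂torusMeasure =
      ((if k = l then cos (s - t) else 0) + if k = -l then cos (s + t) else 0) / 2 := by
  have product_to_sum (x : ℝ) : cos (k * x - s) * cos (l * x - t) =
      (cos ((k - l : ℤ) * x - (s - t)) + cos ((k + l : ℤ) * x - (s + t))) / 2 := by
    rw [eq_div_iff two_ne_zero, mul_comm, ← mul_assoc, two_mul_cos_mul_cos]
    push_cast
    ring_nf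
  have integrable (m : ℤ) (θ : ℝ) : Integrable (fun x => cos (m * x - θ)) torusMeasure :=
    .of_bound (by fun_prop) 1 (.of_forall fun x => abs_cos_le_one _)
  simp_rw [product_to_sum]
  rw [integral_div, integral_add (integrable _ _) (integrable _ _), integral_cos_torusMeasure,
    integral_cos_torusMeasure]
  simp only [sub_eq_zero, add_eq_zero_iff_eq_neg]

end Torus

section TrigSystem

/-- The phase which turns `cos` into `sin` at the positive even indices of `trigSystem`. -/
noncomputable def trigPhase (i : ℕ) : ℝ :=
  if i ≠ 0 ∧ Even i then π / 2 else 0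

/-- The real trigonometric system `1, √2 cos x, √2 sin x, √2 cos 2x, √2 sin 2x, …`, with every
sine written as a shifted cosine. -/
noncomputable def trigSystem (i : ℕ) (x : ℝ) : ℝ :=
  (if i = 0 then 1 else √2) * cos (((i + 1) / 2 : ℕ) * x - trigPhase i)

lemma trigSystem_zero (x : ℝ) : trigSystem 0 x = 1 := by
  simp [trigSystem, trigPhase]

lemma trigSystem_two_mul_add_one (k : ℕ) (x : ℝ) :
    trigSystem (2 * k + 1) x = √2 * cos ((k + 1 : ℝ) * x) := by
  simp [trigSystem, trigPhase, (by omega : (2 * k + 1 + 1) / 2 = k + 1)]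

lemma trigSystem_two_mul_add_two (k : ℕ) (x : ℝ) :
    trigSystem (2 * k + 2) x = √2 * sin ((k + 1 : ℝ) * x) := by
  simp [trigSystem, trigPhase, (by omega : (2 * k + 2 + 1) / 2 = k + 1), Nat.even_add,
    cos_sub_pi_div_two]

lemma measurable_trigSystem (i : ℕ) : Measurable (trigSystem i) := by
  unfold trigSystem
  fun_prop

lemma integral_trigSystem_mul (i j : ℕ) :
    ∫ x, trigSystem i x * trigSystem j x ∂torusMeasure =
      (if i = 0 then 1 else √2) * (if j = 0 then 1 else √2) *
        (((if (i + 1) / 2 = (j + 1) / 2 then cos (trigPhase i - trigPhase j) else 0) +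
          if i = 0 ∧ j = 0 then 1 else 0) / 2) := by
  have := integral_cos_mul_cos_torusMeasure ((i + 1) / 2 : ℕ) ((j + 1) / 2 : ℕ)
    (trigPhase i) (trigPhase j)
  have frequency_eq_neg_iff :
      (((i + 1) / 2 : ℕ) : ℤ) = -((j + 1) / 2 : ℕ) ↔ i = 0 ∧ j = 0 := by omega
  simp only [trigSystem, mul_mul_mul_comm _ (cos _), integral_const_mul]
  simp only [Int.cast_natCast, Nat.cast_inj, frequency_eq_neg_iff] at this
  rw [this]
  rcases eq_or_ne i 0 with rfl | hi
  · rcases eq_or_ne j 0 with rfl | hj <;> simp [trigPhase, *]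
  · simp [hi]

lemma cos_trigPhase_sub_trigPhase {i j : ℕ} (hij : i ≠ j) (hfreq : (i + 1) / 2 = (j + 1) / 2) :
    cos (trigPhase i - trigPhase j) = 0 := by
  wlog hlt : i < j generalizing i j
  · rw [← cos_neg, neg_sub]
    exact this hij.symm hfreq.symm (by omega)
  have odd_i : ¬Even i := by rw [Nat.even_iff]; omega
  have even_j : j ≠ 0 ∧ Even j := by rw [Nat.even_iff]; omega
  simp [trigPhase, odd_i, even_j]

lemma integral_trigSystem_mul_self (i : ℕ) :
    ∫ x, trigSystem i x * trigSystem i x ∂torusMeasure = 1 := by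
  rw [integral_trigSystem_mul]
  rcases eq_or_ne i 0 with rfl | hi
  · simp
  · simp [hi]

lemma integral_trigSystem_mul_of_ne {i j : ℕ} (hij : i ≠ j) :
    ∫ x, trigSystem i x * trigSystem j x ∂torusMeasure = 0 := by
  rw [integral_trigSystem_mul, if_neg (by omega : ¬(i = 0 ∧ j = 0)),
    ite_eq_right_iff.2 (cos_trigPhase_sub_trigPhase hij)]
  simp

lemma sum_univ_two_mul_add_one {M : Type*} [AddCommMonoid M] (n : ℕ) (g : Fin (2 * n + 1) → M) :
    ∑ i, g i = g ⟨0, by omega⟩ + ∑ k : Fin n,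
      (g ⟨2 * k + 1, by omega⟩ + g ⟨2 * k + 2, by omega⟩) := by
  induction n with
  | zero => simp
  | succ n ih =>
    rw [show ∑ i, g i = _ from Fin.sum_univ_castSucc (n := 2 * n + 2) g, Fin.sum_univ_castSucc,
      ih, Fin.sum_univ_castSucc]
    simp only [add_assoc]
    rfl

lemma trigPoly_eq_dotProduct (n : ℕ) (a : Fin (2 * n + 1) → ℝ) (x : ℝ) :
    trigPoly n a x = (fun i : Fin (2 * n + 1) => trigSystem i x) ⬝ᵥ a := by
  rw [dotProduct, sum_univ_two_mul_add_one, trigPoly]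
  simp only [trigSystem_zero, trigSystem_two_mul_add_one, trigSystem_two_mul_add_two]
  simp only [one_mul, mul_assoc, mul_comm (a _)]

lemma trigSystem_dotProduct_self (n : ℕ) (x : ℝ) :
    (fun i : Fin (2 * n + 1) => trigSystem i x) ⬝ᵥ (fun i => trigSystem i x) = 2 * n + 1 := by
  have pair_eq_two (y : ℝ) : √2 * cos y * (√2 * cos y) + √2 * sin y * (√2 * sin y) = 2 := by
    linear_combination √2 ^ 2 * cos_sq_add_sin_sq y + sq_sqrt (zero_le_two (α := ℝ))
  rw [dotProduct, sum_univ_two_mul_add_one]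
  simp [trigSystem_zero, trigSystem_two_mul_add_one, trigSystem_two_mul_add_two, pair_eq_two]
  ring

lemma isFlatOrthonormal_trigSystem (n : ℕ) :
    IsFlatOrthonormal (fun x (i : Fin (2 * n + 1)) => trigSystem i x) torusMeasure 1 where
  measurable := measurable_pi_iff.2 fun i => measurable_trigSystem i
  integral_mul_self i := integral_trigSystem_mul_self i
  integral_mul_of_ne hij := integral_trigSystem_mul_of_ne (Fin.val_injective.ne hij)
  dotProduct_self_le x := by simp [trigSystem_dotProduct_self]

lemma torusLpNorm_trigPoly_div {p q : ℝ≥0} (hp : p ≠ 0) (hq : q ≠ 0) (n : ℕ)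
    (a : Fin (2 * n + 1) → ℝ) :
    torusLpNorm q (trigPoly n a) / torusLpNorm p (trigPoly n a) =
      nikolskiiFactor (fun x (i : Fin (2 * n + 1)) => trigSystem i x) torusMeasure p q a := by
  have trigPoly_eq := funext (trigPoly_eq_dotProduct n a)
  have measurable : Measurable (trigPoly n a) :=
    trigPoly_eq ▸ (isFlatOrthonormal_trigSystem n).measurable_dotProduct a
  rw [torusLpNorm_eq_lpNorm hp measurable, torusLpNorm_eq_lpNorm hq measurable, trigPoly_eq,
    nikolskiiFactor]

end TrigSystem

theorem average_nikolskii_bounded_general (p q : ℝ) (hp : 0 < p) (hq : 0 < q) :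
    ∃ c C : ℝ, 0 < c ∧ 0 < C ∧ ∀ n : ℕ,
      c ≤ (∫ a : Fin (2 * n + 1) → ℝ,
            torusLpNorm q (trigPoly n a) / torusLpNorm p (trigPoly n a)
            ∂(Measure.pi fun _ => gaussianReal 0 1)) ∧
        (∫ a : Fin (2 * n + 1) → ℝ,
            torusLpNorm q (trigPoly n a) / torusLpNorm p (trigPoly n a)
            ∂(Measure.pi fun _ => gaussianReal 0 1)) ≤ C := by
  lift p to ℝ≥0 using hp.le
  lift q to ℝ≥0 using hq.le
  replace hp : p ≠ 0 := (NNReal.coe_pos.1 hp).ne'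
  replace hq : q ≠ 0 := (NNReal.coe_pos.1 hq).ne'
  obtain ⟨j, hj⟩ := exists_nat_ge (max 2 (max (max p (4 / p)) (max q (4 / q))))
  simp only [max_le_iff] at hj
  obtain ⟨hj, ⟨hpj, hpj'⟩, hqj, hqj'⟩ := hj
  have le_two_mul {s : ℝ≥0} (hs : s ≤ j) : s ≤ 2 * j :=
    hs.trans (le_mul_of_one_le_left' one_le_two)
  refine ⟨(projectionMomentConst j)⁻¹, projectionMomentConst j,
    inv_pos.2 (projectionMomentConst_pos j), projectionMomentConst_pos j, fun n => ?_⟩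
  have h := isFlatOrthonormal_trigSystem n
  simp_rw [torusLpNorm_trigPoly_div hp hq]
  constructor
  · simpa using h.inv_le_integral_nikolskiiFactor hp hq (by exact_mod_cast hj) (le_two_mul hpj)
      (le_two_mul hpj') (le_two_mul hqj) (le_two_mul hqj')
  · simpa using h.integral_nikolskiiFactor_le hp hq (by exact_mod_cast hj) (le_two_mul hpj)
      (le_two_mul hpj') (le_two_mul hqj)

/-- For `1 ≤ p, q < ∞` the average Nikolskii factor
`E[‖T_a‖_q / ‖T_a‖_p]` is bounded above and below by positive constants independent of `n`. -/
theorem average_nikolskii_bounded (p q : ℝ) (hp : 1 ≤ p) (hq : 1 ≤ q) :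
    ∃ c C : ℝ, 0 < c ∧ 0 < C ∧ ∀ n : ℕ,
      c ≤ (∫ a : Fin (2 * n + 1) → ℝ,
            torusLpNorm q (trigPoly n a) / torusLpNorm p (trigPoly n a)
            ∂(Measure.pi fun _ => gaussianReal 0 1)) ∧
        (∫ a : Fin (2 * n + 1) → ℝ,
            torusLpNorm q (trigPoly n a) / torusLpNorm p (trigPoly n a)
            ∂(Measure.pi fun _ => gaussianReal 0 1)) ≤ C :=
  average_nikolskii_bounded_general p q (one_pos.trans_le hp) (one_pos.trans_le hq)
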